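/- arXiv:2507.11695 — 2 statements merged into one kernel-verified Lean document; each statement's English description precedes it below -/
import Mathlib

section
/- Let W be a real vector space, A : W × W → ℝ a symmetric bilinear form, m : W × W → ℝ a symmetric bilinear form, and λ, λ_h real numbers. Let U, U_h ∈ W and let W_h ⊆ W be a linear subspace with U_h ∈ W_h. Assume the consistency relation A(U, X) = λ m(U, X) for all X ∈ W, and the discrete eigen-equation A(U_h, X_h) = λ_h m(U_h, X_h) for all X_h ∈ W_h. Then A(U − U_h, U − U_h) − λ m(U − U_h, U − U_h) = (λ_h − λ) m(U_h, U_h). -/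
/-!
The form `B = A - lam • m` is reflexive and annihilates the exact eigenvector `U`, so translation by
`U` does not change `X ↦ B X X`: the left-hand side equals `B Uh Uh`, which the discrete equation
tested with `Uh` itself evaluates.
-/

section Reflexive

variable {R R₁ M W : Type*} [CommRing R] [AddCommGroup M] [Module R M] [CommSemiring R₁]
  [AddCommGroup W] [Module R₁ W] {I₁ I₂ : R₁ →+* R}

theorem apply_sub_sub_of_isRefl_of_apply_eq_zero {B : W →ₛₗ[I₁] W →ₛₗ[I₂] M} (hB : B.IsRefl)
    {x : W} (hx : B x = 0) (y : W) : B (x - y) (x - y) = B y y := by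
  have hyx : B y x = 0 := hB x y (LinearMap.congr_fun hx y)
  simp [hx, hyx]

theorem stmt_4_general {A m : W →ₛₗ[I₁] W →ₛₗ[I₂] M} {lam lamh : R} {U Uh : W}
    (hrefl : (A - lam • m).IsRefl) (hcons : ∀ X, A U X = lam • m U X)
    (hdisc : A Uh Uh = lamh • m Uh Uh) :
    A (U - Uh) (U - Uh) - lam • m (U - Uh) (U - Uh) = (lamh - lam) • m Uh Uh := by
  have hU : (A - lam • m) U = 0 := LinearMap.ext fun X ↦ sub_eq_zero.mpr (hcons X)
  calc
    A (U - Uh) (U - Uh) - lam • m (U - Uh) (U - Uh)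
      = A Uh Uh - lam • m Uh Uh := apply_sub_sub_of_isRefl_of_apply_eq_zero hrefl hU Uh
    _ = (lamh - lam) • m Uh Uh := by rw [hdisc, sub_smul]

end Reflexive

/-- Algebraic identity behind the double-order eigenvalue error estimate: if `(lam, U)`
satisfies the eigen-equation against all of `W` and `(lamh, Uh)` satisfies the discrete
eigen-equation against the subspace `Wh ∋ Uh`, then
`A(U − Uh, U − Uh) − lam·m(U − Uh, U − Uh) = (lamh − lam)·m(Uh, Uh)`. -/
theorem stmt_4
    {W : Type*} [AddCommGroup W] [Module ℝ W]
    (A : W →ₗ[ℝ] W →ₗ[ℝ] ℝ) (hAsymm : ∀ X Y : W, A X Y = A Y X)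
    (m : W →ₗ[ℝ] W →ₗ[ℝ] ℝ) (hmsymm : ∀ X Y : W, m X Y = m Y X)
    (lam lamh : ℝ) (U Uh : W) (Wh : Submodule ℝ W) (hUh : Uh ∈ Wh)
    (hcons : ∀ X : W, A U X = lam * m U X)
    (hdisc : ∀ Xh ∈ Wh, A Uh Xh = lamh * m Uh Xh) :
    A (U - Uh) (U - Uh) - lam * m (U - Uh) (U - Uh) = (lamh - lam) * m Uh Uh := by
  have hrefl : (A - lam • m).IsRefl := fun X Y hXY ↦ by
    simpa only [LinearMap.sub_apply, LinearMap.smul_apply, hAsymm Y X, hmsymm Y X] using hXY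
  exact stmt_4_general hrefl hcons (hdisc Uh hUh)
end

section
/- Let W be a real normed space, A : W × W → ℝ a symmetric bilinear form with |A(X,Y)| ≤ C_A ‖X‖ ‖Y‖ for all X, Y ∈ W, and m : W × W → ℝ a symmetric bilinear form with |m(X,X)| ≤ C_m ‖X‖² for all X ∈ W. Let λ, λ_h ∈ ℝ, U ∈ W, W_h ⊆ W a subspace, and U_h ∈ W_h with A(U, X) = λ m(U, X) for all X ∈ W and A(U_h, X_h) = λ_h m(U_h, X_h) for all X_h ∈ W_h. If m(U_h, U_h) ≥ c̃ for some c̃ > 0, then |λ − λ_h| ≤ ((C_A + |λ| C_m)/c̃) ‖U − U_h‖². -/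
/-!
Write `B = A - lam • m`. The eigen-equation says that `B U = 0`, and `B` is symmetric, so all terms
of `B (U - Uh) (U - Uh)` that contain `U` vanish. What remains is `B Uh Uh`, which equals
`(lamh - lam) * m Uh Uh` because `A Uh Uh = lamh * m Uh Uh`. Hence the eigenvalue error is
quadratic in `U - Uh`.
-/

theorem apply_sub_sub_eq_apply_self_of_isRefl {R S M N : Type*} [CommSemiring R]
    [CommSemiring S] [AddCommGroup M] [Module R M] [AddCommGroup N] [Module S N] {I₁ I₂ : R →+* S}
    {B : M →ₛₗ[I₁] M →ₛₗ[I₂] N} (hB : B.IsRefl) {u : M} (hu : B u = 0) (v : M) :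
    B (u - v) (u - v) = B v v := by
  have hvu : B v u = 0 := hB u v (by rw [hu, LinearMap.zero_apply])
  rw [map_sub B, hu, zero_sub, LinearMap.neg_apply, map_sub, hvu, zero_sub, neg_neg]

section RayleighQuotient

open LinearMap (BilinForm)

theorem rayleigh_sub_eigenvalue_mul_eq {R M : Type*} [CommRing R] [AddCommGroup M]
    [Module R M] {A m : BilinForm R M} (hA : A.IsSymm) (hm : m.IsSymm) {lam mu : R} {u v : M}
    (hu : A u = lam • m u) (hv : A v v = mu * m v v) :
    (mu - lam) * m v v = A (u - v) (u - v) - lam * m (u - v) (u - v) := by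
  have hsymm : (A - lam • m).IsSymm := hA.sub (hm.smul lam)
  have hker : (A - lam • m) u = 0 := sub_eq_zero.mpr hu
  calc
    (mu - lam) * m v v = (A - lam • m) v v := by
      simp only [LinearMap.sub_apply, LinearMap.smul_apply, smul_eq_mul, hv, sub_mul]
    _ = (A - lam • m) (u - v) (u - v) :=
      (apply_sub_sub_eq_apply_self_of_isRefl hsymm.isRefl hker v).symm
    _ = A (u - v) (u - v) - lam * m (u - v) (u - v) := rfl

theorem abs_eigenvalue_sub_rayleigh_mul_le {R M : Type*} [CommRing R] [LinearOrder R]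
    [IsStrictOrderedRing R] [AddCommGroup M] [Module R M] {A m : BilinForm R M} (hA : A.IsSymm)
    (hm : m.IsSymm) {lam mu : R} {u v : M} (hu : A u = lam • m u) (hv : A v v = mu * m v v) :
    |lam - mu| * |m v v| ≤ |A (u - v) (u - v)| + |lam| * |m (u - v) (u - v)| := by
  rw [abs_sub_comm lam mu, ← abs_mul, ← abs_mul, rayleigh_sub_eigenvalue_mul_eq hA hm hu hv]
  exact abs_sub _ _

theorem stmt_5_general {W : Type*} [SeminormedAddCommGroup W] [NormedSpace ℝ W]
    {A m : BilinForm ℝ W} (hA : A.IsSymm) (hm : m.IsSymm) {CA Cm : ℝ}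
    (hCA : ∀ x, |A x x| ≤ CA * ‖x‖ ^ 2) (hCm : ∀ x, |m x x| ≤ Cm * ‖x‖ ^ 2)
    {lam mu : ℝ} {u v : W} (hu : A u = lam • m u) (hv : A v v = mu * m v v)
    {c : ℝ} (hc : 0 < c) (hcv : c ≤ |m v v|) :
    |lam - mu| ≤ (CA + |lam| * Cm) / c * ‖u - v‖ ^ 2 := by
  rw [div_mul_eq_mul_div, le_div_iff₀ hc]
  calc
    |lam - mu| * c ≤ |lam - mu| * |m v v| := by gcongr
    _ ≤ |A (u - v) (u - v)| + |lam| * |m (u - v) (u - v)| :=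
      abs_eigenvalue_sub_rayleigh_mul_le hA hm hu hv
    _ ≤ CA * ‖u - v‖ ^ 2 + |lam| * (Cm * ‖u - v‖ ^ 2) := by
      gcongr
      exacts [hCA _, hCm _]
    _ = (CA + |lam| * Cm) * ‖u - v‖ ^ 2 := by ring

end RayleighQuotient

/-- Abstract core of the double-order eigenvalue error estimate for the symmetric IPDG
scheme: under consistency, the discrete eigen-equation, and a lower bound
`m(Uh, Uh) ≥ c̃ > 0`, one has `|lam − lamh| ≤ ((C_A + |lam| C_m)/c̃) ‖U − Uh‖²`. -/
theorem stmt_5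
    {W : Type*} [NormedAddCommGroup W] [NormedSpace ℝ W]
    (A : W →ₗ[ℝ] W →ₗ[ℝ] ℝ) (hAsymm : ∀ X Y : W, A X Y = A Y X)
    (CA : ℝ) (hCA : ∀ X Y : W, |A X Y| ≤ CA * ‖X‖ * ‖Y‖)
    (m : W →ₗ[ℝ] W →ₗ[ℝ] ℝ) (hmsymm : ∀ X Y : W, m X Y = m Y X)
    (Cm : ℝ) (hCm : ∀ X : W, |m X X| ≤ Cm * ‖X‖ ^ 2)
    (lam lamh : ℝ) (U : W) (Wh : Submodule ℝ W) (Uh : W) (hUh : Uh ∈ Wh)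
    (hcons : ∀ X : W, A U X = lam * m U X)
    (hdisc : ∀ Xh ∈ Wh, A Uh Xh = lamh * m Uh Xh)
    (ctil : ℝ) (hctil : 0 < ctil) (hlow : ctil ≤ m Uh Uh) :
    |lam - lamh| ≤ ((CA + |lam| * Cm) / ctil) * ‖U - Uh‖ ^ 2 := by
  have hCA_diag (X : W) : |A X X| ≤ CA * ‖X‖ ^ 2 := by simpa only [sq, mul_assoc] using hCA X X
  exact stmt_5_general ⟨hAsymm⟩ ⟨hmsymm⟩ hCA_diag hCm (LinearMap.ext hcons) (hdisc Uh hUh) hctil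
    (hlow.trans (le_abs_self _))
end
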